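/- For any mixed graph G = (V, E, A) and positive integer k, (−1)^{|V|} χ̂_G(−k) equals the number of pairs (c, O) where c is a k-coloring of V and O is an acyclic orientation of G compatible with c, i.e., c(u) ≤ c(v) for every u→v in O. Here χ̂_G is the strong chromatic polynomial of G, counting colorings c : V → {1,...,k} with c(u) ≠ c(v) for uv ∈ E and c(u) < c(v) for arcs u→v ∈ A. -/

import Mathlib

/-- A mixed graph on vertex set `V`: `E` are the undirected edges (a pair `{u,v}`
may be recorded as `E u v` or `E v u`), `A` are the arcs (directed edges). -/
structure MixedGraph (V : Type*) where
  E : V → V → Prop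
  A : V → V → Prop

/-- A weak proper coloring: distinct colors along edges, weakly increasing along arcs. -/
def MixedGraph.IsWeakColoring {V : Type*} (G : MixedGraph V) {k : ℕ} (c : V → Fin k) : Prop :=
  (∀ u v, G.E u v → c u ≠ c v) ∧ (∀ u v, G.A u v → c u ≤ c v)

/-- The weak chromatic counting function: the number of weak proper `k`-colorings. -/
noncomputable def MixedGraph.weakChi {V : Type*} (G : MixedGraph V) (k : ℕ) : ℕ :=
  Nat.card {c : V → Fin k // G.IsWeakColoring c}

/-- `O` is an orientation of the mixed graph `G`: it contains all arcs, orients every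
undirected edge in exactly one of the two directions, and contains nothing else. -/
def MixedGraph.IsOrientation {V : Type*} (G : MixedGraph V) (O : V → V → Prop) : Prop :=
  (∀ u v, G.A u v → O u v) ∧
  (∀ u v, G.E u v → (O u v ↔ ¬ O v u)) ∧
  (∀ u v, O u v → G.A u v ∨ G.E u v ∨ G.E v u)

/-- A relation is acyclic if it admits no directed cycle. -/
def IsAcyclicRel {V : Type*} (O : V → V → Prop) : Prop :=
  ∀ v, ¬ Relation.TransGen O v v

/-- A mixed graph is acyclic if all of its orientations are acyclic. -/
def MixedGraph.Acyclic {V : Type*} (G : MixedGraph V) : Prop :=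
  ∀ O : V → V → Prop, G.IsOrientation O → IsAcyclicRel O

/-- A coloring `c` is intercompatible with an orientation `O` of `G` if for every `u → v`
in `O` we have `c u ≤ c v` when `uv` is an undirected edge of `G`, and `c u < c v`
when `u → v` is an arc of `G`. -/
def MixedGraph.Intercompatible {V : Type*} (G : MixedGraph V) (O : V → V → Prop)
    {k : ℕ} (c : V → Fin k) : Prop :=
  ∀ u v, O u v → ((G.E u v ∨ G.E v u) → c u ≤ c v) ∧ (G.A u v → c u < c v)

/-!
A strong coloring orients every edge towards its larger color, so strong colorings are pairs of
an acyclic orientation `O` and a strictly `O`-increasing map. It remains to show, for an acyclic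
relation `r` (Stanley), that the number of strictly increasing maps into `Fin k` is a polynomial
in `k` whose value at `-k` is, up to the sign `(-1) ^ |V|`, the number of weakly increasing maps.

Both counts are the values of a single function on `ℤ`. Removing the set `S` of vertices of the
largest color, which consists of sinks, gives `F_V (n + 1) = ∑ S, F_{V \ S} n` for `n ≥ 0`; for
`n < 0` the same equation is inclusion-exclusion over the sinks of the largest color. So the
forward difference of `F_V` is the sum of the `F_{V \ S}` with `S ≠ ∅`, and by induction on `|V|`
it is a polynomial on all of `ℤ`.
-/

open Finset

section Polynomial

open Polynomial

theorem exists_eval_add_one_sub_eval_eq (p : ℚ[X]) :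
    ∃ q : ℚ[X], ∀ x, q.eval (x + 1) - q.eval x = p.eval x := by
  induction p using Polynomial.induction_on' with
  | add p₁ p₂ h₁ h₂ =>
    obtain ⟨q₁, hq₁⟩ := h₁
    obtain ⟨q₂, hq₂⟩ := h₂
    exact ⟨q₁ + q₂, fun x ↦ by rw [eval_add, eval_add, eval_add, ← hq₁, ← hq₂]; ring⟩
  | monomial m a =>
    refine ⟨C (a / (m + 1)) * Polynomial.bernoulli (m + 1), fun x ↦ ?_⟩
    have hm : (m + 1 : ℚ) ≠ 0 := by positivity
    rw [eval_mul, eval_mul, add_comm x, bernoulli_eval_one_add, eval_C, eval_C, eval_monomial,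
      Nat.add_sub_cancel]
    push_cast
    field_simp
    ring

theorem exists_eval_intCast_eq_of_forall_sub_eq {f : ℤ → ℚ} (p : ℚ[X])
    (hf : ∀ n, f (n + 1) - f n = p.eval (n : ℚ)) :
    ∃ q : ℚ[X], ∀ n : ℤ, q.eval (n : ℚ) = f n := by
  obtain ⟨q, hq⟩ := exists_eval_add_one_sub_eval_eq p
  have hstep (n : ℤ) : f (n + 1) - f n = q.eval (n + 1 : ℚ) - q.eval (n : ℚ) := by rw [hf, hq]
  refine ⟨q + C (f 0 - q.eval 0), fun n ↦ ?_⟩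
  rw [eval_add, eval_C]
  induction n using Int.induction_on with
  | zero => simp
  | succ n ih =>
    have h := hstep n
    push_cast at h ih ⊢
    linarith
  | pred n ih =>
    have h := hstep (-n - 1)
    rw [sub_add_cancel] at h
    push_cast at h ih ⊢
    rw [sub_add_cancel] at h
    linarith

theorem eq_of_forall_pos_eval_natCast_eq {R : Type*} [CommRing R] [IsDomain R] [CharZero R]
    {p q : R[X]} (h : ∀ k : ℕ, 0 < k → p.eval (k : R) = q.eval (k : R)) : p = q := by
  refine eq_of_infinite_eval_eq p q
    (((Set.Ioi_infinite 0).image Nat.cast_injective.injOn).mono ?_)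
  rintro _ ⟨k, hk, rfl⟩
  exact h k hk

end Polynomial

/-- Maps that strictly increase along `r`: for an acyclic relation, the strict maps counted by
the strict order polynomial. -/
abbrev StrictHom {V : Type*} (r : V → V → Prop) (β : Type*) [LT β] : Type _ :=
  r →r ((· < ·) : β → β → Prop)

/-- Maps that weakly increase along `r`: for an acyclic relation, the maps counted by the
(weak) order polynomial. -/
abbrev WeakHom {V : Type*} (r : V → V → Prop) (β : Type*) [LE β] : Type _ :=
  r →r ((· ≤ ·) : β → β → Prop)

section Glue

variable {V β γ : Type*} {r : V → V → Prop} {s : β → β → Prop} {s' : γ → γ → Prop} {t : γ}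

open Classical in
/-- The extension by the constant `t` on a set `S` of sinks of `r` of a relation homomorphism
defined off `S`; its values off `S` are moved along `f`. -/
noncomputable def glueConst (S : Finset V) (hS : ∀ v ∈ S, ∀ u, ¬ r v u) (f : s ↪r s')
    (ht : ∀ b, s' (f b) t) (d : Subrel r (· ∉ S) →r s) : r →r s' where
  toFun v := if hv : v ∈ S then t else f (d ⟨v, hv⟩)
  map_rel' {u v} huv := by
    have hu : u ∉ S := fun hu ↦ hS u hu v huv
    rw [dif_neg hu]
    split_ifs with hv
    · exact ht _
    · exact f.map_rel_iff.2 (d.map_rel huv)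

section

variable {S : Finset V} (hS : ∀ v ∈ S, ∀ u, ¬ r v u) (f : s ↪r s') (ht : ∀ b, s' (f b) t)

theorem glueConst_of_mem (d : Subrel r (· ∉ S) →r s) {v : V} (hv : v ∈ S) :
    glueConst S hS f ht d v = t :=
  dif_pos hv

theorem glueConst_of_notMem (d : Subrel r (· ∉ S) →r s) {v : V} (hv : v ∉ S) :
    glueConst S hS f ht d v = f (d ⟨v, hv⟩) :=
  dif_neg hv

theorem glueConst_injective : Function.Injective (glueConst S hS f ht) := by
  intro d d' h
  ext ⟨v, hv⟩
  apply f.injective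
  rw [← glueConst_of_notMem hS f ht d hv, ← glueConst_of_notMem hS f ht d' hv, h]

theorem exists_glueConst_eq {c : r →r s'} (hcS : ∀ v ∈ S, c v = t)
    (hc : ∀ v ∉ S, c v ∈ Set.range f) : ∃ d, glueConst S hS f ht d = c := by
  choose d hd using fun v : {v // v ∉ S} ↦ hc v v.2
  refine ⟨⟨d, fun {u v} huv ↦ ?_⟩, RelHom.ext fun v ↦ ?_⟩
  · rw [← f.map_rel_iff, hd, hd]
    exact c.map_rel huv
  · by_cases hv : v ∈ S
    · rw [glueConst_of_mem hS f ht _ hv, hcS v hv]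
    · rw [glueConst_of_notMem hS f ht _ hv]
      exact hd ⟨v, hv⟩

end

theorem card_relHom_eq_const_on {S : Finset V} (hS : ∀ v ∈ S, ∀ u, ¬ r v u) (f : s ↪r s')
    (ht : ∀ b, s' (f b) t) :
    Nat.card {c : r →r s' // (∀ v ∈ S, c v = t) ∧ ∀ v ∉ S, c v ∈ Set.range f} =
      Nat.card (Subrel r (· ∉ S) →r s) := by
  symm
  refine Nat.card_congr (.ofBijective (fun d ↦ ⟨glueConst S hS f ht d,
    fun v hv ↦ glueConst_of_mem hS f ht d hv,
    fun v hv ↦ ⟨_, (glueConst_of_notMem hS f ht d hv).symm⟩⟩) ⟨?_, ?_⟩)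
  · exact fun d d' h ↦ glueConst_injective hS f ht (Subtype.ext_iff.1 h)
  · rintro ⟨c, hcS, hc⟩
    obtain ⟨d, hd⟩ := exists_glueConst_eq hS f ht hcS hc
    exact ⟨d, Subtype.ext hd⟩

end Glue

section Acyclic

variable {V : Type*} {r : V → V → Prop}

theorem isAcyclicRel_of_forall_lt {β : Type*} [Preorder β] (c : V → β)
    (hc : ∀ u v, r u v → c u < c v) : IsAcyclicRel r := by
  intro v hv
  have hlt : Relation.TransGen (· < ·) (c v) (c v) := hv.lift c hc
  rw [Relation.transGen_eq_self] at hlt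
  exact lt_irrefl _ hlt

theorem IsAcyclicRel.subrel (hr : IsAcyclicRel r) (p : V → Prop) : IsAcyclicRel (Subrel r p) :=
  fun v hv ↦ hr v (hv.lift Subtype.val fun _ _ ↦ id)

theorem IsAcyclicRel.wellFounded_swap [Finite V] (hr : IsAcyclicRel r) :
    WellFounded (Function.swap r) := by
  have : IsTrans V (Function.swap (Relation.TransGen r)) := ⟨fun _ _ _ h h' ↦ h'.trans h⟩
  have : Std.Irrefl (Function.swap (Relation.TransGen r)) := ⟨hr⟩
  exact (Finite.wellFounded_of_trans_of_irrefl (Function.swap (Relation.TransGen r))).mono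
    fun _ _ h ↦ Relation.TransGen.single h

end Acyclic

/-- Deleting the empty set of vertices does not change a relation. -/
def subrelNotMemEmptyIso {V : Type*} (r : V → V → Prop) : Subrel r (· ∉ (∅ : Finset V)) ≃r r where
  toEquiv := Equiv.subtypeUnivEquiv notMem_empty
  map_rel_iff' := Iff.rfl

section Recursion

variable {V : Type*} {r : V → V → Prop}

theorem card_weakHom_forall_ne_last (k : ℕ) :
    Nat.card {c : WeakHom r (Fin (k + 1)) // ∀ v, c v ≠ Fin.last k} =
      Nat.card (WeakHom r (Fin k)) := by
  have h := card_relHom_eq_const_on (S := ∅) (r := r) (t := Fin.last k) (by simp)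
    Fin.castSuccOrderEmb fun _ ↦ Fin.le_last _
  rw [Nat.card_congr (RelIso.relHomCongr (subrelNotMemEmptyIso r) (.refl _))] at h
  rw [← h]
  refine Nat.card_congr (Equiv.subtypeEquivRight fun c ↦ ?_)
  simp [← Fin.exists_castSucc_eq]

variable [Fintype V]

open Classical in
/-- The vertices of `r` without outgoing arcs. They are the vertices that can take a color larger
than all other colors. -/
noncomputable def sinks (r : V → V → Prop) : Finset V := {v | ∀ u, ¬ r v u}

theorem mem_sinks {v : V} : v ∈ sinks r ↔ ∀ u, ¬ r v u := by
  simp [sinks]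

theorem StrictHom.mem_sinks_of_eq_last {k : ℕ} (c : StrictHom r (Fin (k + 1))) {v : V}
    (hv : c v = Fin.last k) : v ∈ sinks r :=
  mem_sinks.2 fun u hvu ↦ (Fin.le_last (c u)).not_gt (hv ▸ c.map_rel hvu)

theorem card_strictHom_succ (k : ℕ) :
    Nat.card (StrictHom r (Fin (k + 1))) =
      ∑ S ∈ (sinks r).powerset, Nat.card (StrictHom (Subrel r (· ∉ S)) (Fin k)) := by
  classical
  rw [Nat.card_eq_fintype_card, ← card_univ, card_eq_sum_card_fiberwise
    (f := fun c ↦ ({v | c v = Fin.last k} : Finset V)) (t := (sinks r).powerset)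
    fun c _ ↦ mem_coe.2 (mem_powerset.2 fun v hv ↦ c.mem_sinks_of_eq_last (by simpa using hv))]
  refine sum_congr rfl fun S hS ↦ ?_
  rw [← card_relHom_eq_const_on (fun v hv ↦ mem_sinks.1 (mem_powerset.1 hS hv))
    Fin.castSuccOrderEmb.ltEmbedding (t := Fin.last k) Fin.castSucc_lt_last]
  refine (Nat.subtype_card _ fun c ↦ ?_).symm
  have hrange (i : Fin (k + 1)) :
      i ∈ Set.range (Fin.castSuccOrderEmb (n := k)).ltEmbedding ↔ i ≠ Fin.last k :=
    Fin.exists_castSucc_eq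
  simp only [mem_filter, mem_univ, true_and, Finset.ext_iff, hrange]
  grind

theorem WeakHom.ne_last_of_forall_sinks (hr : IsAcyclicRel r) {k : ℕ}
    (c : WeakHom r (Fin (k + 1))) (hc : ∀ v ∈ sinks r, c v ≠ Fin.last k) (v : V) :
    c v ≠ Fin.last k := by
  induction v using hr.wellFounded_swap.induction with
  | _ v ih =>
    by_cases hv : v ∈ sinks r
    · exact hc v hv
    · obtain ⟨u, hvu⟩ : ∃ u, r v u := by simpa [mem_sinks] using hv
      intro hlast
      exact ih u hvu (Fin.last_le_iff.1 (hlast ▸ c.map_rel hvu))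

theorem card_weakHom_eq_sum (hr : IsAcyclicRel r) (k : ℕ) :
    (Nat.card (WeakHom r (Fin k)) : ℤ) = ∑ S ∈ (sinks r).powerset,
      (-1) ^ #S * (Nat.card (WeakHom (Subrel r (· ∉ S)) (Fin (k + 1))) : ℤ) := by
  classical
  let lastAt (v : V) : Finset (WeakHom r (Fin (k + 1))) := {c | c v = Fin.last k}
  have hcompl : Nat.card (WeakHom r (Fin k)) = #((sinks r).inf fun v ↦ (lastAt v)ᶜ) := by
    rw [← card_weakHom_forall_ne_last]
    refine Nat.subtype_card _ fun c ↦ ?_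
    simpa [lastAt, mem_inf] using ⟨c.ne_last_of_forall_sinks hr, fun h v _ ↦ h v⟩
  rw [hcompl, inclusion_exclusion_card_inf_compl]
  refine sum_congr rfl fun S hS ↦ ?_
  rw [← card_relHom_eq_const_on (fun v hv ↦ mem_sinks.1 (mem_powerset.1 hS hv))
    (RelEmbedding.refl _) (t := Fin.last k) Fin.le_last]
  congr 2
  refine (Nat.subtype_card _ fun c ↦ ?_).symm
  simp [lastAt, mem_inf]

end Recursion

section OrderCount

open scoped Polynomial

variable {V : Type*} {r : V → V → Prop}

/-- The number of strict maps into `Fin n` for `n ≥ 0`, and the number of weak maps into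
`Fin (-n)` times `(-1) ^ |V|` for `n < 0`. For an acyclic relation on a finite type, these are the
values of the strict order polynomial at the integers. -/
noncomputable def signedOrderCount (r : V → V → Prop) : ℤ → ℤ
  | .ofNat k => Nat.card (StrictHom r (Fin k))
  | .negSucc k => (-1) ^ Nat.card V * Nat.card (WeakHom r (Fin (k + 1)))

theorem signedOrderCount_natCast (k : ℕ) :
    signedOrderCount r k = Nat.card (StrictHom r (Fin k)) :=
  rfl

theorem card_strictHom_fin_zero :
    (Nat.card (StrictHom r (Fin 0)) : ℤ) = (-1) ^ Nat.card V * Nat.card (WeakHom r (Fin 0)) := by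
  rcases isEmpty_or_nonempty V with hV | ⟨⟨v⟩⟩
  · have card_eq_one (s : Fin 0 → Fin 0 → Prop) : Nat.card (r →r s) = 1 :=
      Nat.card_eq_one_iff_unique.2
        ⟨⟨fun _ _ ↦ RelHom.ext isEmptyElim⟩, ⟨⟨isEmptyElim, fun {u} ↦ isEmptyElim u⟩⟩⟩
    simp only [card_eq_one, Nat.card_of_isEmpty, pow_zero, one_mul]
  · have (s : Fin 0 → Fin 0 → Prop) : IsEmpty (r →r s) := ⟨fun c ↦ (c v).elim0⟩
    simp only [Nat.card_of_isEmpty, Nat.cast_zero, mul_zero]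

theorem signedOrderCount_neg_natCast (k : ℕ) :
    signedOrderCount r (-k) = (-1) ^ Nat.card V * Nat.card (WeakHom r (Fin k)) := by
  cases k with
  | zero => exact card_strictHom_fin_zero
  | succ k => rfl

theorem signedOrderCount_congr {W : Type*} {s : W → W → Prop} (e : r ≃r s) (n : ℤ) :
    signedOrderCount r n = signedOrderCount s n := by
  cases n with
  | ofNat k =>
    simp only [signedOrderCount]
    rw [Nat.card_congr (RelIso.relHomCongr e (.refl _))]
  | negSucc k =>
    simp only [signedOrderCount]
    rw [Nat.card_congr e.toEquiv, Nat.card_congr (RelIso.relHomCongr e (.refl _))]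

theorem signedOrderCount_add_one [Fintype V] (hr : IsAcyclicRel r) (n : ℤ) :
    signedOrderCount r (n + 1) =
      ∑ S ∈ (sinks r).powerset, signedOrderCount (Subrel r (· ∉ S)) n := by
  cases n with
  | ofNat k =>
    simp only [signedOrderCount, Int.ofNat_eq_natCast, ← Nat.cast_succ]
    exact mod_cast card_strictHom_succ k
  | negSucc k =>
    rw [Int.negSucc_eq, neg_add, neg_add_cancel_right, signedOrderCount_neg_natCast,
      card_weakHom_eq_sum hr, mul_sum]
    refine sum_congr rfl fun S _ ↦ ?_
    have hcard : Nat.card {v // v ∉ S} + #S = Nat.card V := by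
      classical
      rw [Nat.subtype_card Sᶜ fun _ ↦ mem_compl, card_compl_add_card, Nat.card_eq_fintype_card]
    rw [← neg_add, ← Nat.cast_succ, signedOrderCount_neg_natCast, ← mul_assoc, ← hcard, pow_add,
      mul_assoc (_ ^ _), ← mul_pow, neg_one_mul, neg_neg, one_pow, mul_one]

theorem IsAcyclicRel.exists_eval_eq_signedOrderCount [Finite V] (hr : IsAcyclicRel r) :
    ∃ q : ℚ[X], ∀ n : ℤ, q.eval (n : ℚ) = signedOrderCount r n := by
  classical
  induction hV : Nat.card V using Nat.strong_induction_on generalizing V with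
  | _ m ih =>
  cases nonempty_fintype V
  have hproper : ∀ S ∈ (sinks r).powerset.erase ∅, ∃ q : ℚ[X], ∀ n : ℤ,
      q.eval (n : ℚ) = signedOrderCount (Subrel r (· ∉ S)) n := by
    intro S hS
    obtain ⟨v, hv⟩ := nonempty_iff_ne_empty.2 (ne_of_mem_erase hS)
    exact ih _ (hV ▸ Finite.card_subtype_lt (not_not.2 hv)) (hr.subrel _) rfl
  choose! q hq using hproper
  refine exists_eval_intCast_eq_of_forall_sub_eq (∑ S ∈ (sinks r).powerset.erase ∅, q S)
    fun n ↦ ?_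
  rw [signedOrderCount_add_one hr, ← add_sum_erase _ _ (empty_mem_powerset _),
    signedOrderCount_congr (subrelNotMemEmptyIso r), Polynomial.eval_finsetSum,
    sum_congr rfl fun S hS ↦ hq S hS n]
  push_cast
  ring

end OrderCount

namespace MixedGraph

variable {V β : Type*} {G : MixedGraph V} {O : V → V → Prop} {c : V → β}

/-- The colorings counted by the strong chromatic polynomial. -/
def IsStrongColoring [LT β] (G : MixedGraph V) (c : V → β) : Prop :=
  (∀ u v, G.E u v → c u ≠ c v) ∧ ∀ u v, G.A u v → c u < c v

/-- The edges and arcs of `G` along which `c` increases. For a strong coloring this is the unique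
orientation along which `c` strictly increases. -/
def increasingPart [LT β] (G : MixedGraph V) (c : V → β) (u v : V) : Prop :=
  (G.A u v ∨ G.E u v ∨ G.E v u) ∧ c u < c v

theorem IsStrongColoring.isOrientation_increasingPart [LinearOrder β]
    (hc : G.IsStrongColoring c) : G.IsOrientation (G.increasingPart c) := by
  refine ⟨fun u v h ↦ ⟨.inl h, hc.2 u v h⟩, fun u v h ↦ ⟨fun huv hvu ↦ huv.2.asymm hvu.2, ?_⟩,
    fun u v h ↦ h.1⟩
  exact fun hvu ↦ ⟨.inr (.inl h),
    (hc.1 u v h).lt_of_le (not_lt.1 fun hlt ↦ hvu ⟨.inr (.inr h), hlt⟩)⟩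

theorem IsOrientation.eq_increasingPart [Preorder β] (hO : G.IsOrientation O)
    (hc : ∀ u v, O u v → c u < c v) : O = G.increasingPart c := by
  ext u v
  refine ⟨fun h ↦ ⟨hO.2.2 u v h, hc u v h⟩, ?_⟩
  rintro ⟨hA | hE | hE, hlt⟩
  · exact hO.1 u v hA
  · exact (hO.2.1 u v hE).2 fun hvu ↦ hlt.asymm (hc v u hvu)
  · exact not_not.1 fun huv ↦ hlt.asymm (hc v u ((hO.2.1 v u hE).2 huv))

theorem IsOrientation.isStrongColoring [Preorder β] (hO : G.IsOrientation O)
    (hc : ∀ u v, O u v → c u < c v) : G.IsStrongColoring c := by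
  refine ⟨fun u v h ↦ ?_, fun u v h ↦ hc u v (hO.1 u v h)⟩
  by_cases huv : O u v
  · exact (hc u v huv).ne
  · exact (hc v u (not_not.1 fun hvu ↦ huv ((hO.2.1 u v h).2 hvu))).ne'

/-- The acyclic orientations of `G`. -/
abbrev AcyclicOrientation (G : MixedGraph V) : Type _ :=
  {O : V → V → Prop // G.IsOrientation O ∧ IsAcyclicRel O}

/-- A strong coloring is an acyclic orientation with a map strictly increasing along it. -/
def strongColoringEquiv (G : MixedGraph V) (β : Type*) [LinearOrder β] :
    {c : V → β // G.IsStrongColoring c} ≃ Σ O : G.AcyclicOrientation, StrictHom O.1 β where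
  toFun c := ⟨⟨G.increasingPart c.1, c.2.isOrientation_increasingPart,
    isAcyclicRel_of_forall_lt c.1 fun _ _ h ↦ h.2⟩, c.1, fun h ↦ h.2⟩
  invFun x := ⟨x.2, x.1.2.1.isStrongColoring fun _ _ ↦ x.2.map_rel⟩
  left_inv _ := rfl
  right_inv := by
    rintro ⟨⟨O, hO, hacyc⟩, c, hc⟩
    obtain rfl : O = G.increasingPart c := hO.eq_increasingPart fun _ _ ↦ hc
    rfl

/-- A coloring compatible with an acyclic orientation is a map weakly increasing along it. -/
def compatiblePairEquiv (G : MixedGraph V) (β : Type*) [LE β] :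
    {q : (V → β) × (V → V → Prop) //
      G.IsOrientation q.2 ∧ IsAcyclicRel q.2 ∧ ∀ u v, q.2 u v → q.1 u ≤ q.1 v} ≃
      Σ O : G.AcyclicOrientation, WeakHom O.1 β where
  toFun q := ⟨⟨q.1.2, q.2.1, q.2.2.1⟩, q.1.1, q.2.2.2 _ _⟩
  invFun x := ⟨(x.2, x.1.1), x.1.2.1, x.1.2.2, fun _ _ ↦ x.2.map_rel⟩
  left_inv _ := rfl
  right_inv _ := rfl

end MixedGraph

/-- Reciprocity for the strong chromatic polynomial of a mixed graph (Beck–Bogart–Pham):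
`(-1)^{|V|} χ̂_G(-k)` equals the number of pairs `(c, O)` of a `k`-coloring `c` and an
acyclic orientation `O` of `G` compatible with `c` (i.e. `c u ≤ c v` for every `u → v`
in `O`). -/
theorem stmt19 {V : Type*} [Fintype V] (G : MixedGraph V) (p : Polynomial ℚ)
    (hp : ∀ k : ℕ, 0 < k →
      p.eval (k : ℚ) = Nat.card {c : V → Fin k //
        (∀ u v, G.E u v → c u ≠ c v) ∧ (∀ u v, G.A u v → c u < c v)})
    (k : ℕ) (hk : 0 < k) :
    (-1) ^ Fintype.card V * p.eval (-(k : ℚ)) =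
      Nat.card {q : (V → Fin k) × (V → V → Prop) //
        G.IsOrientation q.2 ∧ IsAcyclicRel q.2 ∧ ∀ u v, q.2 u v → q.1 u ≤ q.1 v} := by
  classical
  replace hp : ∀ n : ℕ, 0 < n →
      p.eval (n : ℚ) = Nat.card {c : V → Fin n // G.IsStrongColoring c} := hp
  choose q hq using fun O : G.AcyclicOrientation ↦ O.2.2.exists_eval_eq_signedOrderCount
  have hp_eq : p = ∑ O, q O := by
    refine eq_of_forall_pos_eval_natCast_eq fun n hn ↦ ?_
    rw [hp n hn, Nat.card_congr (G.strongColoringEquiv (Fin n)), Nat.card_sigma, Nat.cast_sum,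
      Polynomial.eval_finsetSum]
    refine sum_congr rfl fun O _ ↦ ?_
    have hpos := hq O n
    rw [signedOrderCount_natCast] at hpos
    exact mod_cast hpos.symm
  rw [Nat.card_congr (G.compatiblePairEquiv (Fin k)), Nat.card_sigma, Nat.cast_sum, hp_eq,
    Polynomial.eval_finsetSum, mul_sum]
  refine sum_congr rfl fun O _ ↦ ?_
  have hneg := hq O (-k)
  rw [signedOrderCount_neg_natCast, Nat.card_eq_fintype_card] at hneg
  push_cast at hneg
  rw [hneg, ← mul_assoc, ← mul_pow, neg_one_mul, neg_neg, one_pow, one_mul]
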